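/- arXiv:0912.1518 — 2 statements merged into one kernel-verified Lean document; each statement's English description precedes it below -/
import Mathlib

section
/- Let m_1, l_2, m_2 be positive integers with m_1 < l_2 ≤ m_2. Then the number of subsets X of [1,m_1] ∪ [l_2,m_2] such that l_2 ∈ X and gcd(X) = 1 equals Σ_{d | l_2} μ(d) · 2^{⌊m_1/d⌋ + ⌊m_2/d⌋ − l_2/d}. -/
/-!
Since `gcd X` divides `l₂` whenever `l₂ ∈ X`, the indicator of `gcd X = 1` is the sum of `μ d` over
the divisors `d` of `l₂` that divide `gcd X`. Exchanging sums leaves, for each `d`, the number of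
sets `X` consisting of multiples of `d` and containing `l₂`: one free choice for every other
multiple of `d`.
-/

open Finset
open scoped ArithmeticFunction.Moebius

theorem sum_divisors_moebius (n : ℕ) : ∑ d ∈ n.divisors, μ d = if n = 1 then 1 else 0 := by
  rw [← ArithmeticFunction.coe_mul_zeta_apply, ArithmeticFunction.moebius_mul_coe_zeta,
    ArithmeticFunction.one_apply]

theorem card_filter_eq_one_eq_sum_moebius {ι : Type*} (s : Finset ι) (f : ι → ℕ) {n : ℕ}
    (hn : n ≠ 0) (hf : ∀ i ∈ s, f i ∣ n) :
    (#{i ∈ s | f i = 1} : ℤ) = ∑ d ∈ n.divisors, μ d * #{i ∈ s | d ∣ f i} := by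
  calc (#{i ∈ s | f i = 1} : ℤ)
    _ = ∑ i ∈ s, if f i = 1 then 1 else 0 := (sum_boole _ _).symm
    _ = ∑ i ∈ s, ∑ d ∈ n.divisors, if d ∣ f i then μ d else 0 := by
        refine sum_congr rfl fun i hi => ?_
        rw [← sum_filter, Nat.divisors_filter_dvd_of_dvd hn (hf i hi), sum_divisors_moebius]
    _ = ∑ d ∈ n.divisors, ∑ i ∈ s, if d ∣ f i then μ d else 0 := sum_comm
    _ = ∑ d ∈ n.divisors, μ d * #{i ∈ s | d ∣ f i} := by
        simp only [← sum_filter, sum_const, nsmul_eq_mul, mul_comm]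

theorem card_filter_powerset_mem_and_forall {α : Type*} [DecidableEq α] {s : Finset α} {a : α}
    {p : α → Prop} [DecidablePred p] (ha : a ∈ s) (hp : p a) :
    #{X ∈ s.powerset | a ∈ X ∧ ∀ x ∈ X, p x} = 2 ^ #{x ∈ s.erase a | p x} := by
  have ha' : a ∈ s.filter p := mem_filter.2 ⟨ha, hp⟩
  have eq_Icc : {X ∈ s.powerset | a ∈ X ∧ ∀ x ∈ X, p x} = Icc {a} (s.filter p) := by
    ext X
    simp only [mem_filter, mem_powerset, mem_Icc, subset_iff]
    grind
  rw [eq_Icc, card_Icc_finset (singleton_subset_iff.2 ha'), card_singleton, filter_erase,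
    card_erase_of_mem ha']

theorem card_filter_powerset_mem_and_gcd_eq_one {s : Finset ℕ} {a : ℕ} (ha : a ∈ s)
    (ha₀ : a ≠ 0) :
    (#{X ∈ s.powerset | a ∈ X ∧ X.gcd id = 1} : ℤ) =
      ∑ d ∈ a.divisors, μ d * 2 ^ #{x ∈ s.erase a | d ∣ x} := by
  have gcd_dvd_a : ∀ X ∈ s.powerset.filter (a ∈ ·), X.gcd id ∣ a := fun X hX =>
    gcd_dvd (mem_filter.1 hX).2
  rw [← filter_filter, card_filter_eq_one_eq_sum_moebius _ _ ha₀ gcd_dvd_a]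
  refine sum_congr rfl fun d hd => ?_
  simp only [filter_filter, Finset.dvd_gcd_iff, id_eq]
  rw [card_filter_powerset_mem_and_forall ha (Nat.dvd_of_mem_divisors hd), Nat.cast_pow,
    Nat.cast_ofNat]

theorem card_filter_dvd_Ioc {a b : ℕ} (h : a ≤ b) (d : ℕ) :
    #{x ∈ Ioc a b | d ∣ x} = b / d - a / d := by
  have card_add : #{x ∈ Ioc 0 a | d ∣ x} + #{x ∈ Ioc a b | d ∣ x} = #{x ∈ Ioc 0 b | d ∣ x} := by
    rw [← Ioc_union_Ioc_eq_Ioc a.zero_le h, filter_union, card_union_of_disjoint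
      (disjoint_filter_filter (Ioc_disjoint_Ioc_of_le le_rfl))]
  rw [Nat.Ioc_filter_dvd_card_eq_div, Nat.Ioc_filter_dvd_card_eq_div] at card_add
  exact Nat.eq_sub_of_add_eq' card_add

theorem card_filter_dvd_Ioc_union_Ioc {k l m : ℕ} (hkl : k ≤ l) (hlm : l ≤ m) (d : ℕ) :
    #{x ∈ Ioc 0 k ∪ Ioc l m | d ∣ x} = k / d + m / d - l / d := by
  rw [filter_union, card_union_of_disjoint
    (disjoint_filter_filter (Ioc_disjoint_Ioc_of_le hkl)), Nat.Ioc_filter_dvd_card_eq_div,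
    card_filter_dvd_Ioc hlm, Nat.add_sub_assoc (Nat.div_le_div_right hlm)]

/-- Lemma 1(a): the number of relatively prime subsets of `[1,m₁] ∪ [l₂,m₂]`
containing `l₂` equals `∑_{d ∣ l₂} μ(d) 2^{⌊m₁/d⌋ + ⌊m₂/d⌋ - l₂/d}`. -/
theorem stmt_1 (m₁ l₂ m₂ : ℕ) (hm₁ : 0 < m₁) (h₁ : m₁ < l₂) (h₂ : l₂ ≤ m₂) :
    ((((Finset.Icc 1 m₁ ∪ Finset.Icc l₂ m₂).powerset).filter
        (fun X : Finset ℕ => l₂ ∈ X ∧ X.gcd id = 1)).card : ℤ)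
      = ∑ d ∈ l₂.divisors,
          (ArithmeticFunction.moebius d) * 2 ^ (m₁ / d + m₂ / d - l₂ / d) := by
  have hl₂ : l₂ ∈ Icc 1 m₁ ∪ Icc l₂ m₂ := mem_union_right _ (left_mem_Icc.2 h₂)
  have erase_eq : (Icc 1 m₁ ∪ Icc l₂ m₂).erase l₂ = Ioc 0 m₁ ∪ Ioc l₂ m₂ := by
    ext x
    simp only [mem_erase, mem_union, mem_Icc, mem_Ioc]
    omega
  rw [card_filter_powerset_mem_and_gcd_eq_one hl₂ (Nat.ne_zero_of_lt h₁), erase_eq]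
  simp only [card_filter_dvd_Ioc_union_Ioc h₁.le h₂]
end

section
/- Let m_1, l_2, m_2, k be positive integers with m_1 < l_2 ≤ m_2. Then the number of subsets X of [1,m_1] ∪ [l_2,m_2] such that l_2 ∈ X, |X| = k, and gcd(X) = 1 equals Σ_{d | l_2} μ(d) · C(⌊m_1/d⌋ + ⌊m_2/d⌋ − l_2/d, k−1), where C(·,·) denotes the binomial coefficient. -/
/-!
Möbius inversion over the divisors of `l₂ ∈ X` reduces the count of sets `X` with `gcd X = 1` to
counting, for each `d ∣ l₂`, the sets `X` all of whose elements are multiples of `d`. Such an `X`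
is `l₂` together with any `k - 1` of the other multiples of `d` in `[1,m₁] ∪ [l₂,m₂]`.
-/

namespace RelativelyPrimeSubsets

open Finset
open scoped ArithmeticFunction.Moebius

theorem sum_divisors_moebius (n : ℕ) : ∑ d ∈ n.divisors, μ d = if n = 1 then 1 else 0 := by
  rw [← ArithmeticFunction.coe_zeta_mul_apply, ArithmeticFunction.coe_zeta_mul_moebius,
    ArithmeticFunction.one_apply]

theorem card_filter_eq_one_eq_sum_moebius {ι : Type*} {s : Finset ι} {f : ι → ℕ} {n : ℕ}
    (hn : n ≠ 0) (hf : ∀ i ∈ s, f i ∣ n) :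
    (#{i ∈ s | f i = 1} : ℤ) = ∑ d ∈ n.divisors, μ d * #{i ∈ s | d ∣ f i} := by
  calc (#{i ∈ s | f i = 1} : ℤ)
      = ∑ i ∈ s, if f i = 1 then 1 else 0 := (sum_boole _ _).symm
    _ = ∑ i ∈ s, ∑ d ∈ n.divisors with d ∣ f i, μ d :=
        sum_congr rfl fun i hi => by
          rw [Nat.divisors_filter_dvd_of_dvd hn (hf i hi), sum_divisors_moebius]
    _ = ∑ d ∈ n.divisors, ∑ i ∈ s with d ∣ f i, μ d := by
        simp only [sum_filter]
        exact sum_comm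
    _ = ∑ d ∈ n.divisors, μ d * #{i ∈ s | d ∣ f i} :=
        sum_congr rfl fun d _ => by rw [sum_const, nsmul_eq_mul, mul_comm]

section Gcd

variable {α β : Type*} [CommMonoidWithZero α] [NormalizedGCDMonoid α]

theorem filter_powersetCard_dvd_gcd (d : α) [DecidablePred (d ∣ ·)] (A : Finset β) (f : β → α)
    (n : ℕ) : {X ∈ A.powersetCard n | d ∣ X.gcd f} = powersetCard n {x ∈ A | d ∣ f x} := by
  ext X
  simp only [mem_filter, mem_powersetCard, Finset.dvd_gcd_iff, subset_iff, imp_and, forall_and,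
    and_right_comm]

theorem card_filter_powersetCard_subset_dvd_gcd [DecidableEq β] {d : α} [DecidablePred (d ∣ ·)]
    {A B : Finset β} {f : β → α} {n : ℕ} (hBA : B ⊆ A) (hBn : #B ≤ n) (hd : d ∣ B.gcd f) :
    #{X ∈ A.powersetCard n | B ⊆ X ∧ d ∣ X.gcd f} =
      (#{x ∈ A | d ∣ f x} - #B).choose (n - #B) := by
  have hB : B ⊆ {x ∈ A | d ∣ f x} := fun x hx =>
    mem_filter.2 ⟨hBA hx, Finset.dvd_gcd_iff.1 hd x hx⟩
  rw [← card_filter_powersetCard_subset B _ n hB hBn, ← filter_filter, filter_comm,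
    filter_powersetCard_dvd_gcd]

end Gcd

theorem card_filter_powersetCard_subset_gcd_eq_one {β : Type*} [DecidableEq β] {A B : Finset β}
    {f : β → ℕ} {n : ℕ} (hBA : B ⊆ A) (hBn : #B ≤ n) (hB : B.gcd f ≠ 0) :
    (#{X ∈ A.powersetCard n | B ⊆ X ∧ X.gcd f = 1} : ℤ) =
      ∑ d ∈ (B.gcd f).divisors, μ d * (#{x ∈ A | d ∣ f x} - #B).choose (n - #B) := by
  have gcd_dvd : ∀ X ∈ {X ∈ A.powersetCard n | B ⊆ X}, X.gcd f ∣ B.gcd f := fun X hX =>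
    gcd_mono (mem_filter.1 hX).2
  rw [← filter_filter, card_filter_eq_one_eq_sum_moebius hB gcd_dvd]
  refine sum_congr rfl fun d hd => ?_
  rw [filter_filter,
    card_filter_powersetCard_subset_dvd_gcd hBA hBn (Nat.dvd_of_mem_divisors hd)]

theorem card_filter_dvd_Ioc (a b d : ℕ) : #{x ∈ Ioc a b | d ∣ x} = b / d - a / d := by
  rcases le_total a b with hab | hba
  · have hsplit : #{x ∈ Ioc 0 b | d ∣ x} = #{x ∈ Ioc 0 a | d ∣ x} + #{x ∈ Ioc a b | d ∣ x} := by
      rw [← Ioc_union_Ioc_eq_Ioc (Nat.zero_le a) hab, filter_union,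
        card_union_of_disjoint (disjoint_filter_filter (Ioc_disjoint_Ioc_of_le le_rfl))]
    rw [Nat.Ioc_filter_dvd_card_eq_div, Nat.Ioc_filter_dvd_card_eq_div] at hsplit
    exact Nat.eq_sub_of_add_eq' hsplit.symm
  · rw [Ioc_eq_empty_of_le hba, filter_empty, card_empty,
      Nat.sub_eq_zero_of_le (Nat.div_le_div_right hba)]

theorem card_filter_dvd_Icc_of_dvd_left {l m d : ℕ} (hlm : l ≤ m) (hd : d ∣ l) :
    #{x ∈ Icc l m | d ∣ x} = m / d - l / d + 1 := by
  rw [← Ioc_insert_left hlm, filter_insert, if_pos hd, card_insert_of_notMem (by simp),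
    card_filter_dvd_Ioc]

theorem card_filter_dvd_Icc_union_Icc {m₁ l₂ m₂ d : ℕ} (h₁ : m₁ < l₂) (h₂ : l₂ ≤ m₂)
    (hd : d ∣ l₂) :
    #{x ∈ Icc 1 m₁ ∪ Icc l₂ m₂ | d ∣ x} = m₁ / d + m₂ / d - l₂ / d + 1 := by
  have hdisj : Disjoint (Icc 1 m₁) (Icc l₂ m₂) := disjoint_left.2 fun x hx hx' =>
    ((mem_Icc.1 hx).2.trans_lt h₁).not_ge (mem_Icc.1 hx').1
  have hIcc : #{x ∈ Icc 1 m₁ | d ∣ x} = m₁ / d := Nat.Ioc_filter_dvd_card_eq_div m₁ d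
  rw [filter_union, card_union_of_disjoint (disjoint_filter_filter hdisj), hIcc,
    card_filter_dvd_Icc_of_dvd_left h₂ hd, Nat.add_sub_assoc (Nat.div_le_div_right h₂), add_assoc]

end RelativelyPrimeSubsets

open RelativelyPrimeSubsets

/-- Lemma 1(b): the number of `k`-element relatively prime subsets of
`[1,m₁] ∪ [l₂,m₂]` containing `l₂` equals
`∑_{d ∣ l₂} μ(d) C(⌊m₁/d⌋ + ⌊m₂/d⌋ - l₂/d, k-1)`. -/
theorem stmt_2 (m₁ l₂ m₂ k : ℕ) (hm₁ : 0 < m₁) (hk : 0 < k)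
    (h₁ : m₁ < l₂) (h₂ : l₂ ≤ m₂) :
    ((((Finset.Icc 1 m₁ ∪ Finset.Icc l₂ m₂).powerset).filter
        (fun X : Finset ℕ => l₂ ∈ X ∧ X.card = k ∧ X.gcd id = 1)).card : ℤ)
      = ∑ d ∈ l₂.divisors,
          (ArithmeticFunction.moebius d) *
            (Nat.choose (m₁ / d + m₂ / d - l₂ / d) (k - 1)) := by
  have hsub : {l₂} ⊆ Finset.Icc 1 m₁ ∪ Finset.Icc l₂ m₂ :=
    Finset.singleton_subset_iff.2 (Finset.mem_union_right _ (Finset.left_mem_Icc.2 h₂))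
  have hgcd : ({l₂} : Finset ℕ).gcd id = l₂ := Finset.gcd_singleton.trans (normalize_eq l₂)
  have hl₂ : ({l₂} : Finset ℕ).gcd id ≠ 0 := hgcd.trans_ne (Nat.ne_zero_of_lt h₁)
  have hcount := card_filter_powersetCard_subset_gcd_eq_one hsub hk hl₂
  simp only [hgcd, id_eq, Finset.singleton_subset_iff, Finset.card_singleton,
    Finset.powersetCard_eq_filter, Finset.filter_filter] at hcount
  simp only [and_left_comm (a := l₂ ∈ _), hcount]
  refine Finset.sum_congr rfl fun d hd => ?_
  rw [card_filter_dvd_Icc_union_Icc h₁ h₂ (Nat.dvd_of_mem_divisors hd), Nat.add_sub_cancel]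
end
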